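/- There exists a unique linear map N : ΛV → ΛV (normal ordering) such that for every n ≥ 0 and all v₁, …, v_n ∈ V, N(v₁ ∧ ⋯ ∧ v_n) = Σ_{P ∈ 𝔓_n} (−1)^P (−1)^{|P|} (Π_{(i,j) ∈ P} B(v_i, v_j)) · v_{k₁} ∧ ⋯ ∧ v_{k_{n−2|P|}}, where 𝔓_n is the set of partial pairings of [n] and k₁ < ⋯ < k_{n−2|P|} enumerates [n] ∖ ∪P. In particular, the displayed expression is an alternating multilinear function of (v₁, …, v_n), so it descends from tensor powers of V to the exterior algebra ΛV; consequently the normally ordered product of linear fields is well defined and satisfies N(v_{σ(1)} ∧ ⋯ ∧ v_{σ(n)}) = sgn(σ)·N(v₁ ∧ ⋯ ∧ v_n) for every permutation σ. -/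

import Mathlib

/-! `N` is the change-of-form map of Clifford algebras. For an alternating `B` the quadratic form
`x ↦ B x x` vanishes, so `CliffordAlgebra.changeForm` gives a linear endomorphism `N` of the
exterior algebra (the Clifford algebra of the zero form) with `N 1 = 1` and
`N (m ∧ x) = m ∧ N x - B m ⌋ N x`, where `⌋` is the interior product.

The closed formula satisfies the same recursion (`normalOrderRHS_succ`). A partial pairing of
`n + 1` points either leaves `0` unpaired, and is then a shifted pairing of `n` points, or pairs
`0` with the shift of an index `k` left unpaired by a pairing `Q` of `n` points
(`sum_partialPairings_succ`). The pairings of the first kind give `m ∧ N x`. For those of the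
second kind, the sign acquired by moving `k` past the even number of paired indices and past the
unpaired indices below it (`listSign_append_erase`) is the Koszul sign of the interior product of
a list wedge (`contractLeft_wedgeList`).

Hence the closed formula is `N ∘ ιMulti`, which is alternating and multilinear; uniqueness holds
because the wedges of vectors span.
-/


/-- A partial pairing of `[n] = {1,…,n}` (here `Fin n`): a finite set of pairs `(i,j)`
with `i < j`, all endpoints pairwise distinct. -/
def IsPartialPairing {n : ℕ} (P : Finset (Fin n × Fin n)) : Prop :=
  (∀ p ∈ P, p.1 < p.2) ∧
    ∀ p ∈ P, ∀ q ∈ P, p ≠ q →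
      p.1 ≠ q.1 ∧ p.1 ≠ q.2 ∧ p.2 ≠ q.1 ∧ p.2 ≠ q.2

instance {n : ℕ} : DecidablePred (IsPartialPairing (n := n)) := fun P => by
  unfold IsPartialPairing; infer_instance

/-- The finite set `𝔓_n` of partial pairings of `[n]`. -/
def partialPairings (n : ℕ) : Finset (Finset (Fin n × Fin n)) :=
  Finset.univ.filter IsPartialPairing

/-- `∪P`: the set of indices used by the pairing `P`. -/
def pairedIndices {n : ℕ} (P : Finset (Fin n × Fin n)) : Finset (Fin n) :=
  P.biUnion fun p => {p.1, p.2}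

/-- The list `i₁, j₁, i₂, j₂, …` of paired indices, the pairs being listed in
lexicographic order (the sign below does not depend on this choice of order). -/
def pairList {n : ℕ} (P : Finset (Fin n × Fin n)) : List (Fin n) :=
  ((P.image fun p => toLex p).sort (· ≤ ·)).flatMap fun q => [(ofLex q).1, (ofLex q).2]

/-- The increasing list `k₁ < ⋯ < k_{n−2p}` of unpaired indices. -/
def unpairedList {n : ℕ} (P : Finset (Fin n × Fin n)) : List (Fin n) :=
  (Finset.univ \ pairedIndices P).sort (· ≤ ·)

/-- The sign of a list of indices, as `(−1)^{number of inversions}`; for a duplicate-free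
enumeration of `Fin n` this is the sign of the corresponding permutation. -/
def listSign {n : ℕ} (L : List (Fin n)) : ℤ :=
  (-1) ^ (Finset.univ.filter fun ab : Fin L.length × Fin L.length =>
      ab.1 < ab.2 ∧ L.get ab.2 < L.get ab.1).card

/-- `(−1)^P`: the signature of the permutation `(1,…,n) ↦ (i₁, j₁, …, i_p, j_p, k₁, …)`. -/
def pairingSign {n : ℕ} (P : Finset (Fin n × Fin n)) : ℤ :=
  listSign (pairList P ++ unpairedList P)

noncomputable section

variable {V : Type} [AddCommGroup V] [Module ℂ V]

/-- The wedge product `v_{l₁} ∧ ⋯ ∧ v_{l_m}` over a list `l` of indices. -/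
def wedgeList {n : ℕ} (v : Fin n → V) (l : List (Fin n)) : ExteriorAlgebra ℂ V :=
  (l.map fun k => ExteriorAlgebra.ι ℂ (v k)).prod

/-- The wedge product `v₁ ∧ ⋯ ∧ v_n`. -/
def wedgeAll {n : ℕ} (v : Fin n → V) : ExteriorAlgebra ℂ V :=
  wedgeList v (List.finRange n)

/-- The right-hand side of the closed formula for normal ordering:
`Σ_{P ∈ 𝔓_n} (−1)^P (−1)^{|P|} (Π_{(i,j)∈P} B(v_i,v_j)) · v_{k₁} ∧ ⋯ ∧ v_{k_{n−2|P|}}`. -/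
def normalOrderRHS (B : V →ₗ[ℂ] V →ₗ[ℂ] ℂ) {n : ℕ} (v : Fin n → V) :
    ExteriorAlgebra ℂ V :=
  ∑ P ∈ partialPairings n,
    ((pairingSign P : ℂ) * (-1 : ℂ) ^ P.card * ∏ p ∈ P, B (v p.1) (v p.2)) •
      wedgeList v (unpairedList P)

/-- `N` is a normal ordering map for the Wick contraction `B`: it is linear and satisfies
the closed formula on all wedges of vectors. -/
def IsNormalOrdering (B : V →ₗ[ℂ] V →ₗ[ℂ] ℂ)
    (N : ExteriorAlgebra ℂ V →ₗ[ℂ] ExteriorAlgebra ℂ V) : Prop :=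
  ∀ (n : ℕ) (v : Fin n → V), N (wedgeAll v) = normalOrderRHS B v

end


/-! ### Signs of lists -/

theorem listSign_cons {n : ℕ} (a : Fin n) (L : List (Fin n)) :
    listSign (a :: L) = (-1) ^ (L.countP (· < a)) * listSign L := by
  have key : (Finset.univ.filter fun j : Fin L.length => L.get j < a).card
      = L.countP (· < a) := by
    induction L with
    | nil => simp
    | cons b L ih =>
      rw [Finset.card_filter] at ih ⊢
      rw [List.countP_cons, ← ih]
      rw [add_comm]
      simp only [decide_eq_true_eq]
      exact Fin.sum_univ_succ (n := L.length) fun j => if (b :: L).get j < a then 1 else 0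
  unfold listSign
  rw [← pow_add, ← key]
  congr 1
  simp only [Finset.card_filter, Fintype.sum_prod_type, List.length_cons, Fin.sum_univ_succ]
  simp

theorem listSign_map_succ {n : ℕ} (L : List (Fin n)) :
    listSign (L.map Fin.succ) = listSign L := by
  induction L with
  | nil => rfl
  | cons a L ih =>
    simp only [List.map_cons, listSign_cons, ih, List.countP_map]
    congr 2
    simp [Function.comp_def]

theorem listSign_zero_cons {n : ℕ} (L : List (Fin (n + 1))) :
    listSign (0 :: L) = listSign L := by
  simp [listSign_cons]

theorem listSign_append_cons {n : ℕ} (k : Fin n) (A C : List (Fin n)) (hk : k ∉ A) :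
    listSign (A ++ k :: C) = (-1) ^ A.length * listSign (k :: (A ++ C)) := by
  induction A with
  | nil => simp
  | cons a A ih =>
    simp only [List.mem_cons, not_or] at hk
    simp only [List.cons_append, listSign_cons, ih hk.2, List.countP_append, List.countP_cons,
      List.length_cons]
    rcases lt_or_gt_of_ne hk.1 with h | h
    · simp [h, h.not_gt]; ring
    · simp [h, h.not_gt]; ring

/-- Moving an entry `k` of `U` to the front of `A ++ U` costs one sign for each entry passed. -/
theorem listSign_append_erase {n : ℕ} (k : Fin n) (A U : List (Fin n)) (hA : k ∉ A)
    (hU : k ∈ U) (hev : Even A.length) :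
    listSign (k :: (A ++ U.erase k)) = (-1) ^ (U.idxOf k) * listSign (A ++ U) := by
  obtain ⟨U₁, U₂, rfl, h₁⟩ := List.eq_append_cons_of_mem hU
  rw [List.erase_append_right _ h₁, List.erase_cons_head, List.idxOf_append_of_notMem h₁,
    List.idxOf_cons_self, add_zero, ← List.append_assoc, ← List.append_assoc,
    listSign_append_cons k (A ++ U₁) U₂ (by simp [hA, h₁]), List.length_append, pow_add,
    hev.neg_one_pow, one_mul, ← mul_assoc, ← pow_add, (Even.add_self _).neg_one_pow, one_mul]

/-! ### Pairings of `n + 1` points -/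

/-- The pairing of `{1, …, n}` inside `Fin (n + 1)` obtained by shifting every index by one. -/
def shiftPairing {n : ℕ} (Q : Finset (Fin n × Fin n)) : Finset (Fin (n + 1) × Fin (n + 1)) :=
  Q.image (Prod.map Fin.succ Fin.succ)

/-- The shifted pairing together with the pair of `0` and the shift of `k`. -/
def consPairing {n : ℕ} (Q : Finset (Fin n × Fin n)) (k : Fin n) :
    Finset (Fin (n + 1) × Fin (n + 1)) :=
  insert (0, k.succ) (shiftPairing Q)

/-- The pairs not involving `0`, shifted back. -/
def unshiftPairing {n : ℕ} (P : Finset (Fin (n + 1) × Fin (n + 1))) : Finset (Fin n × Fin n) :=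
  Finset.univ.filter fun q => (q.1.succ, q.2.succ) ∈ P

theorem mem_shiftPairing {n : ℕ} {Q : Finset (Fin n × Fin n)} {a b : Fin n} :
    (a.succ, b.succ) ∈ shiftPairing Q ↔ (a, b) ∈ Q := by
  simp [shiftPairing]

theorem zero_notMem_shiftPairing {n : ℕ} {Q : Finset (Fin n × Fin n)} {b : Fin (n + 1)} :
    (0, b) ∉ shiftPairing Q := by
  simp [shiftPairing, Fin.succ_ne_zero]

theorem unshiftPairing_shiftPairing {n : ℕ} (Q : Finset (Fin n × Fin n)) :
    unshiftPairing (shiftPairing Q) = Q := by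
  ext ⟨a, b⟩
  simp [unshiftPairing, mem_shiftPairing]

theorem unshiftPairing_consPairing {n : ℕ} (Q : Finset (Fin n × Fin n)) (k : Fin n) :
    unshiftPairing (consPairing Q k) = Q := by
  ext ⟨a, b⟩
  simp [unshiftPairing, consPairing, mem_shiftPairing, Fin.succ_ne_zero]

theorem mem_pairedIndices {n : ℕ} {P : Finset (Fin n × Fin n)} {a : Fin n} :
    a ∈ pairedIndices P ↔ ∃ p ∈ P, a = p.1 ∨ a = p.2 := by
  simp [pairedIndices]

theorem isPartialPairing_shiftPairing {n : ℕ} {Q : Finset (Fin n × Fin n)}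
    (hQ : IsPartialPairing Q) : IsPartialPairing (shiftPairing Q) := by
  constructor
  · intro p hp
    obtain ⟨q, hq, rfl⟩ := Finset.mem_image.1 hp
    simpa using hQ.1 q hq
  · intro p hp p' hp' hne
    obtain ⟨q, hq, rfl⟩ := Finset.mem_image.1 hp
    obtain ⟨q', hq', rfl⟩ := Finset.mem_image.1 hp'
    simpa using hQ.2 q hq q' hq' (fun h => hne (h ▸ rfl))

theorem isPartialPairing_consPairing {n : ℕ} {Q : Finset (Fin n × Fin n)} {k : Fin n}
    (hQ : IsPartialPairing Q) (hk : k ∉ pairedIndices Q) :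
    IsPartialPairing (consPairing Q k) := by
  have hS := isPartialPairing_shiftPairing hQ
  have hk' : ∀ p ∈ shiftPairing Q, p.1 ≠ 0 ∧ p.2 ≠ 0 ∧ p.1 ≠ k.succ ∧ p.2 ≠ k.succ := by
    intro p hp
    obtain ⟨q, hq, rfl⟩ := Finset.mem_image.1 hp
    refine ⟨Fin.succ_ne_zero _, Fin.succ_ne_zero _, ?_, ?_⟩
    · intro h
      exact hk (mem_pairedIndices.2 ⟨q, hq, Or.inl (Fin.succ_injective _ h).symm⟩)
    · intro h
      exact hk (mem_pairedIndices.2 ⟨q, hq, Or.inr (Fin.succ_injective _ h).symm⟩)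
  constructor
  · intro p hp
    rcases Finset.mem_insert.1 hp with rfl | hp
    · exact Fin.succ_pos k
    · exact hS.1 p hp
  · intro p hp q hq hne
    rcases Finset.mem_insert.1 hp with rfl | hp <;> rcases Finset.mem_insert.1 hq with rfl | hq
    · exact absurd rfl hne
    · have := hk' q hq
      exact ⟨this.1.symm, this.2.1.symm, this.2.2.1.symm, this.2.2.2.symm⟩
    · have := hk' p hp
      exact ⟨this.1, this.2.2.1, this.2.1, this.2.2.2⟩
    · exact hS.2 p hp q hq hne

theorem isPartialPairing_unshiftPairing {n : ℕ} {P : Finset (Fin (n + 1) × Fin (n + 1))}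
    (hP : IsPartialPairing P) : IsPartialPairing (unshiftPairing P) := by
  constructor
  · intro p hp
    have := hP.1 _ (Finset.mem_filter.1 hp).2
    simpa using this
  · intro p hp q hq hne
    have := hP.2 _ (Finset.mem_filter.1 hp).2 _ (Finset.mem_filter.1 hq).2
      (fun h => hne (by simpa [Prod.ext_iff] using h))
    simpa using this

theorem mem_shiftPairing_unshiftPairing {n : ℕ} {P : Finset (Fin (n + 1) × Fin (n + 1))}
    {a b : Fin (n + 1)} :
    (a, b) ∈ shiftPairing (unshiftPairing P) ↔ (a, b) ∈ P ∧ a ≠ 0 ∧ b ≠ 0 := by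
  refine Fin.cases ?_ (fun a => ?_) a
  · simp [zero_notMem_shiftPairing]
  · refine Fin.cases ?_ (fun b => ?_) b
    · simp [shiftPairing, Fin.succ_ne_zero]
    · simp [mem_shiftPairing, unshiftPairing, Fin.succ_ne_zero]

theorem eq_shiftPairing {n : ℕ} {P : Finset (Fin (n + 1) × Fin (n + 1))}
    (hP : IsPartialPairing P) (h0 : ∀ b, (0, b) ∉ P) :
    shiftPairing (unshiftPairing P) = P := by
  ext ⟨a, b⟩
  rw [mem_shiftPairing_unshiftPairing]
  refine ⟨fun h => h.1, fun h => ⟨h, ?_, ?_⟩⟩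
  · rintro rfl
    exact h0 b h
  · exact Fin.ne_zero_of_lt (hP.1 _ h)

theorem eq_consPairing {n : ℕ} {P : Finset (Fin (n + 1) × Fin (n + 1))} {k : Fin n}
    (hP : IsPartialPairing P) (h0 : (0, k.succ) ∈ P) :
    k ∉ pairedIndices (unshiftPairing P) ∧ consPairing (unshiftPairing P) k = P := by
  constructor
  · intro h
    obtain ⟨q, hq, hkq⟩ := mem_pairedIndices.1 h
    have hq' := (Finset.mem_filter.1 hq).2
    have := hP.2 _ h0 _ hq' (by simp [Prod.ext_iff, (Fin.succ_ne_zero _).symm])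
    rcases hkq with rfl | rfl <;> simp at this
  · ext ⟨a, b⟩
    rw [consPairing, Finset.mem_insert, mem_shiftPairing_unshiftPairing]
    constructor
    · rintro (h | h)
      · rwa [h]
      · exact h.1
    · intro h
      by_cases hab : (a, b) = (0, k.succ)
      · exact Or.inl hab
      · exact Or.inr ⟨h, (hP.2 _ h _ h0 hab).1, Fin.ne_zero_of_lt (hP.1 _ h)⟩

theorem sum_partialPairings_succ {M : Type*} [AddCommMonoid M] {n : ℕ}
    (f : Finset (Fin (n + 1) × Fin (n + 1)) → M) :
    ∑ P ∈ partialPairings (n + 1), f P =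
      ∑ Q ∈ partialPairings n, f (shiftPairing Q) +
        ∑ Q ∈ partialPairings n, ∑ k ∈ Finset.univ \ pairedIndices Q, f (consPairing Q k) := by
  rw [← Finset.sum_filter_not_add_sum_filter _ (fun P => ∃ b, (0, b) ∈ P), Finset.sum_sigma']
  congr 1
  · refine Finset.sum_nbij' unshiftPairing shiftPairing ?_ ?_ ?_ ?_ ?_
    · intro P hP
      simp only [partialPairings, Finset.mem_filter, Finset.mem_univ, true_and] at hP ⊢
      exact isPartialPairing_unshiftPairing hP.1
    · intro Q hQ
      simp only [partialPairings, Finset.mem_filter, Finset.mem_univ, true_and] at hQ ⊢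
      exact ⟨isPartialPairing_shiftPairing hQ, fun ⟨b, hb⟩ => zero_notMem_shiftPairing hb⟩
    · intro P hP
      simp only [partialPairings, Finset.mem_filter, Finset.mem_univ, true_and, not_exists] at hP
      exact eq_shiftPairing hP.1 hP.2
    · intro Q _
      exact unshiftPairing_shiftPairing Q
    · intro P hP
      simp only [partialPairings, Finset.mem_filter, Finset.mem_univ, true_and, not_exists] at hP
      rw [eq_shiftPairing hP.1 hP.2]
  · symm
    refine Finset.sum_nbij (fun x => consPairing x.1 x.2) ?_ ?_ ?_ ?_
    · rintro ⟨Q, k⟩ h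
      simp only [partialPairings, Finset.mem_sigma, Finset.mem_filter, Finset.mem_univ, true_and,
        Finset.mem_sdiff] at h ⊢
      exact ⟨isPartialPairing_consPairing h.1 h.2, k.succ, Finset.mem_insert_self _ _⟩
    · rintro ⟨Q, k⟩ _ ⟨Q', k'⟩ _ h
      have h : consPairing Q k = consPairing Q' k' := h
      have hQ : Q = Q' := by
        rw [← unshiftPairing_consPairing Q k, h, unshiftPairing_consPairing]
      subst hQ
      have hmem : (0, k.succ) ∈ consPairing Q k' := h ▸ Finset.mem_insert_self _ _
      rcases Finset.mem_insert.1 hmem with h | h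
      · simp only [Prod.mk.injEq, Fin.succ_inj, true_and] at h
        rw [h]
      · exact absurd h zero_notMem_shiftPairing
    · intro P hP
      simp only [partialPairings, Finset.coe_filter, Finset.mem_filter, Finset.mem_univ, true_and,
        Set.mem_ofPred_eq] at hP
      obtain ⟨hP, b, hb⟩ := hP
      obtain ⟨k, rfl⟩ := Fin.exists_succ_eq.2 (Fin.ne_zero_of_lt (hP.1 _ hb))
      refine ⟨⟨unshiftPairing P, k⟩, ?_, (eq_consPairing hP hb).2⟩
      simpa [partialPairings] using
        And.intro (isPartialPairing_unshiftPairing hP) (eq_consPairing hP hb).1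
    · intro _ _
      rfl

/-! ### The index lists of a pairing -/

theorem sort_eq_of_pairwise {α : Type*} [LinearOrder α] (s : Finset α) (l : List α)
    (hl : l.Pairwise (· < ·)) (h : ∀ a, a ∈ l ↔ a ∈ s) : s.sort (· ≤ ·) = l := by
  have hs : s = l.toFinset := by ext a; simp [h]
  subst hs
  exact (List.toFinset_sort (· ≤ ·) hl.nodup).2 (hl.imp le_of_lt)

theorem mem_unpairedList {n : ℕ} {Q : Finset (Fin n × Fin n)} {a : Fin n} :
    a ∈ unpairedList Q ↔ a ∉ pairedIndices Q := by
  simp [unpairedList]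

theorem pairwise_unpairedList {n : ℕ} (Q : Finset (Fin n × Fin n)) :
    (unpairedList Q).Pairwise (· < ·) :=
  (Finset.sortedLT_sort _).pairwise

theorem zero_notMem_pairedIndices_shiftPairing {n : ℕ} {Q : Finset (Fin n × Fin n)} :
    0 ∉ pairedIndices (shiftPairing Q) := by
  simp [mem_pairedIndices, shiftPairing, (Fin.succ_ne_zero _).symm]

theorem succ_mem_pairedIndices_shiftPairing {n : ℕ} {Q : Finset (Fin n × Fin n)} {a : Fin n} :
    a.succ ∈ pairedIndices (shiftPairing Q) ↔ a ∈ pairedIndices Q := by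
  simp [mem_pairedIndices, shiftPairing]

theorem mem_pairedIndices_consPairing {n : ℕ} {Q : Finset (Fin n × Fin n)} {k : Fin n}
    {a : Fin (n + 1)} :
    a ∈ pairedIndices (consPairing Q k) ↔
      a = 0 ∨ a = k.succ ∨ a ∈ pairedIndices (shiftPairing Q) := by
  simp [mem_pairedIndices, consPairing, or_assoc]

theorem unpairedList_shiftPairing {n : ℕ} (Q : Finset (Fin n × Fin n)) :
    unpairedList (shiftPairing Q) = 0 :: (unpairedList Q).map Fin.succ := by
  refine sort_eq_of_pairwise _ _ ?_ ?_
  · rw [List.pairwise_cons]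
    refine ⟨by simp, ?_⟩
    rw [List.pairwise_map]
    exact (pairwise_unpairedList Q).imp (by simp)
  · intro a
    refine Fin.cases ?_ (fun a => ?_) a
    · simp [zero_notMem_pairedIndices_shiftPairing]
    · simp [succ_mem_pairedIndices_shiftPairing, mem_unpairedList, Fin.succ_ne_zero]

theorem unpairedList_consPairing {n : ℕ} (Q : Finset (Fin n × Fin n)) (k : Fin n) :
    unpairedList (consPairing Q k) = ((unpairedList Q).erase k).map Fin.succ := by
  refine sort_eq_of_pairwise _ _ ?_ ?_
  · rw [List.pairwise_map]
    exact ((pairwise_unpairedList Q).sublist List.erase_sublist).imp (by simp)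
  · intro a
    refine Fin.cases ?_ (fun a => ?_) a
    · simp [mem_pairedIndices_consPairing, Fin.succ_ne_zero]
    · simp [mem_pairedIndices_consPairing, succ_mem_pairedIndices_shiftPairing, mem_unpairedList,
        Fin.succ_ne_zero, (pairwise_unpairedList Q).nodup.mem_erase_iff]

/-- The pairs of `P` in lexicographic order. -/
def sortedPairs {n : ℕ} (P : Finset (Fin n × Fin n)) : List (Fin n ×ₗ Fin n) :=
  (P.image fun p => toLex p).sort (· ≤ ·)

theorem mem_sortedPairs {n : ℕ} {P : Finset (Fin n × Fin n)} {p : Fin n ×ₗ Fin n} :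
    p ∈ sortedPairs P ↔ ofLex p ∈ P := by
  simp only [sortedPairs, Finset.mem_sort, Finset.mem_image]
  exact ⟨by rintro ⟨q, hq, rfl⟩; exact hq, fun h => ⟨_, h, rfl⟩⟩

theorem sortedPairs_shiftPairing {n : ℕ} (Q : Finset (Fin n × Fin n)) :
    sortedPairs (shiftPairing Q) =
      (sortedPairs Q).map fun q => toLex ((ofLex q).1.succ, (ofLex q).2.succ) := by
  refine sort_eq_of_pairwise _ _ ?_ ?_
  · rw [List.pairwise_map]
    refine (Finset.sortedLT_sort _).pairwise.imp ?_
    intro a b h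
    rw [Prod.Lex.lt_iff] at h ⊢
    simpa using h
  · intro a
    simp only [List.mem_map, mem_sortedPairs, shiftPairing, Finset.mem_image,
      exists_exists_and_eq_and]
    exact ⟨fun ⟨q, hq, h⟩ => ⟨ofLex q, hq, h⟩, fun ⟨q, hq, h⟩ => ⟨toLex q, hq, h⟩⟩

theorem sortedPairs_consPairing {n : ℕ} (Q : Finset (Fin n × Fin n)) (k : Fin n) :
    sortedPairs (consPairing Q k) = toLex (0, k.succ) :: sortedPairs (shiftPairing Q) := by
  refine sort_eq_of_pairwise _ _ ?_ ?_
  · rw [List.pairwise_cons]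
    refine ⟨?_, (Finset.sortedLT_sort _).pairwise⟩
    intro p hp
    rw [mem_sortedPairs] at hp
    rw [Prod.Lex.lt_iff]
    left
    refine Fin.pos_of_ne_zero fun h => ?_
    have hp' : (0, (ofLex p).2) ∈ shiftPairing Q := by
      rw [← show (ofLex p).1 = 0 from h]
      exact hp
    exact zero_notMem_shiftPairing hp'
  · intro a
    rw [List.mem_cons, mem_sortedPairs, Finset.mem_image]
    constructor
    · rintro (rfl | h)
      · exact ⟨_, Finset.mem_insert_self _ _, rfl⟩
      · exact ⟨_, Finset.mem_insert_of_mem h, rfl⟩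
    · rintro ⟨p, hp, rfl⟩
      rcases Finset.mem_insert.1 hp with rfl | hp
      · exact Or.inl rfl
      · exact Or.inr hp

theorem pairList_eq {n : ℕ} (P : Finset (Fin n × Fin n)) :
    pairList P = (sortedPairs P).flatMap fun q => [(ofLex q).1, (ofLex q).2] := rfl

theorem pairList_shiftPairing {n : ℕ} (Q : Finset (Fin n × Fin n)) :
    pairList (shiftPairing Q) = (pairList Q).map Fin.succ := by
  simp [pairList_eq, sortedPairs_shiftPairing, List.flatMap_map, List.map_flatMap]

theorem pairList_consPairing {n : ℕ} (Q : Finset (Fin n × Fin n)) (k : Fin n) :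
    pairList (consPairing Q k) = 0 :: k.succ :: (pairList Q).map Fin.succ := by
  rw [← pairList_shiftPairing, pairList_eq, sortedPairs_consPairing, List.flatMap_cons]
  rfl

theorem even_length_pairList {n : ℕ} (P : Finset (Fin n × Fin n)) :
    Even (pairList P).length := by
  simp [pairList_eq, List.length_flatMap]

theorem mem_pairList {n : ℕ} {P : Finset (Fin n × Fin n)} {a : Fin n} :
    a ∈ pairList P ↔ a ∈ pairedIndices P := by
  simp only [pairList_eq, List.mem_flatMap, mem_sortedPairs, mem_pairedIndices, List.mem_cons,
    List.not_mem_nil, or_false]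
  exact ⟨fun ⟨q, hq, h⟩ => ⟨ofLex q, hq, h⟩, fun ⟨q, hq, h⟩ => ⟨toLex q, hq, h⟩⟩

theorem pairingSign_shiftPairing {n : ℕ} (Q : Finset (Fin n × Fin n)) :
    pairingSign (shiftPairing Q) = pairingSign Q := by
  rw [pairingSign, pairList_shiftPairing, unpairedList_shiftPairing,
    listSign_append_cons _ _ _ (by simp [Fin.succ_ne_zero]), List.length_map,
    (even_length_pairList Q).neg_one_pow, one_mul, listSign_zero_cons, ← List.map_append,
    listSign_map_succ, pairingSign]

theorem pairingSign_consPairing {n : ℕ} (Q : Finset (Fin n × Fin n)) {k : Fin n}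
    (hk : k ∉ pairedIndices Q) :
    pairingSign (consPairing Q k) = (-1) ^ ((unpairedList Q).idxOf k) * pairingSign Q := by
  rw [pairingSign, pairList_consPairing, unpairedList_consPairing, List.cons_append,
    listSign_zero_cons, List.cons_append, ← List.map_append, ← List.map_cons, listSign_map_succ,
    listSign_append_erase k _ _ (mt mem_pairList.1 hk) (mem_unpairedList.2 hk)
      (even_length_pairList Q), pairingSign]

/-! ### The recursion for the closed formula -/

section Recursion

variable {V : Type} [AddCommGroup V] [Module ℂ V]

theorem wedgeList_map_succ {n : ℕ} (v : Fin (n + 1) → V) (l : List (Fin n)) :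
    wedgeList v (l.map Fin.succ) = wedgeList (Fin.tail v) l := by
  simp [wedgeList, Fin.tail, Function.comp_def]

theorem wedgeList_cons {n : ℕ} (v : Fin n → V) (a : Fin n) (l : List (Fin n)) :
    wedgeList v (a :: l) = ExteriorAlgebra.ι ℂ (v a) * wedgeList v l := by
  simp [wedgeList]

theorem contractLeft_wedgeList (d : Module.Dual ℂ V) {n : ℕ} (v : Fin n → V) (l : List (Fin n))
    (hl : l.Nodup) :
    CliffordAlgebra.contractLeft d (wedgeList v l) =
      ∑ k ∈ l.toFinset, ((-1 : ℂ) ^ (l.idxOf k) * d (v k)) • wedgeList v (l.erase k) := by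
  induction l with
  | nil => simp [wedgeList]
  | cons a l ih =>
    rw [List.nodup_cons] at hl
    rw [wedgeList_cons, CliffordAlgebra.contractLeft_ι_mul, ih hl.2, List.toFinset_cons,
      Finset.sum_insert (by simpa using hl.1), sub_eq_add_neg]
    congr 1
    · simp
    · rw [Finset.mul_sum, ← Finset.sum_neg_distrib]
      refine Finset.sum_congr rfl fun k hk => ?_
      have hka : a ≠ k := by
        rintro rfl
        exact hl.1 (by simpa using hk)
      rw [List.idxOf_cons_ne _ hka, List.erase_cons_tail (by simpa using hka), wedgeList_cons,
        mul_smul_comm, ← neg_smul, pow_succ]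
      congr 1
      ring

theorem normalOrderRHS_succ (B : V →ₗ[ℂ] V →ₗ[ℂ] ℂ) {n : ℕ} (v : Fin (n + 1) → V) :
    normalOrderRHS B v =
      ExteriorAlgebra.ι ℂ (v 0) * normalOrderRHS B (Fin.tail v) -
        CliffordAlgebra.contractLeft (B (v 0)) (normalOrderRHS B (Fin.tail v)) := by
  have hinj : Function.Injective (Prod.map Fin.succ Fin.succ : Fin n × Fin n → _) :=
    (Fin.succ_injective n).prodMap (Fin.succ_injective n)
  have hcard : ∀ Q : Finset (Fin n × Fin n), (shiftPairing Q).card = Q.card := fun Q =>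
    Finset.card_image_of_injective _ hinj
  have hprod : ∀ Q : Finset (Fin n × Fin n), ∏ p ∈ shiftPairing Q, B (v p.1) (v p.2) =
      ∏ p ∈ Q, B (Fin.tail v p.1) (Fin.tail v p.2) := fun Q =>
    Finset.prod_image hinj.injOn
  rw [normalOrderRHS, sum_partialPairings_succ, sub_eq_add_neg]
  congr 1
  · rw [normalOrderRHS, Finset.mul_sum]
    refine Finset.sum_congr rfl fun Q _ => ?_
    rw [pairingSign_shiftPairing, hcard, hprod, unpairedList_shiftPairing, wedgeList_cons,
      wedgeList_map_succ, mul_smul_comm]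
  · rw [normalOrderRHS, map_sum, ← Finset.sum_neg_distrib]
    refine Finset.sum_congr rfl fun Q _ => ?_
    have hU : (unpairedList Q).toFinset = Finset.univ \ pairedIndices Q := by
      simp [unpairedList]
    rw [map_smul, contractLeft_wedgeList _ _ _ (pairwise_unpairedList Q).nodup, hU,
      Finset.smul_sum, ← Finset.sum_neg_distrib]
    refine Finset.sum_congr rfl fun k hk => ?_
    rw [pairingSign_consPairing Q (by simpa using hk), unpairedList_consPairing,
      wedgeList_map_succ, consPairing, Finset.card_insert_of_notMem zero_notMem_shiftPairing,
      Finset.prod_insert zero_notMem_shiftPairing, hcard, hprod, smul_smul, ← neg_smul]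
    congr 1
    simp only [Fin.tail]
    push_cast
    ring

theorem wedgeAll_eq {n : ℕ} (v : Fin n → V) :
    wedgeAll v = ExteriorAlgebra.ιMulti ℂ n v := by
  rw [ExteriorAlgebra.ιMulti_apply, wedgeAll, wedgeList, List.ofFn_eq_map]

theorem toQuadraticMap_eq_sub {B : V →ₗ[ℂ] V →ₗ[ℂ] ℂ} (hB : ∀ x : V, B x x = 0) :
    LinearMap.BilinMap.toQuadraticMap B =
      (0 : QuadraticForm ℂ V) - (0 : QuadraticForm ℂ V) := by
  ext x
  simp [hB]

theorem isNormalOrdering_changeForm {B : V →ₗ[ℂ] V →ₗ[ℂ] ℂ} (hB : ∀ x : V, B x x = 0) :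
    IsNormalOrdering B (CliffordAlgebra.changeForm (toQuadraticMap_eq_sub hB)) := by
  intro n
  induction n with
  | zero =>
    intro v
    have hP : partialPairings 0 = {∅} := by decide
    have hU : unpairedList (∅ : Finset (Fin 0 × Fin 0)) = [] := by simp [unpairedList]
    have hL : pairList (∅ : Finset (Fin 0 × Fin 0)) = [] := by simp [pairList]
    have hS : listSign ([] : List (Fin 0)) = 1 := rfl
    simp [normalOrderRHS, hP, hU, hL, hS, pairingSign, wedgeAll, wedgeList]
  | succ n ih =>
    intro v
    rw [normalOrderRHS_succ, ← ih (Fin.tail v), wedgeAll, List.finRange_succ, wedgeList_cons,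
      wedgeList_map_succ, CliffordAlgebra.changeForm_ι_mul]
    rfl

end Recursion

/-- there exists a unique linear map `N : ΛV → ΛV` (normal ordering)
satisfying the closed formula on wedges; the defining expression is alternating and
multilinear in `(v₁,…,v_n)`, so it descends to the exterior algebra, and `N` satisfies
`N(v_{σ(1)} ∧ ⋯ ∧ v_{σ(n)}) = sgn(σ) · N(v₁ ∧ ⋯ ∧ v_n)` for every permutation `σ`. -/
theorem normal_ordering_exists_unique
    (V : Type) [AddCommGroup V] [Module ℂ V]
    (B : V →ₗ[ℂ] V →ₗ[ℂ] ℂ) (hB : ∀ x : V, B x x = 0) :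
    -- the defining expression is alternating …
    (∀ (n : ℕ) (v : Fin n → V) (i j : Fin n), i ≠ j → v i = v j →
        normalOrderRHS B v = 0) ∧
      -- … and multilinear in (v₁, …, v_n) …
      (∀ (n : ℕ) (v : Fin n → V) (i : Fin n) (c : ℂ) (x y : V),
        normalOrderRHS B (Function.update v i (c • x + y)) =
          c • normalOrderRHS B (Function.update v i x) +
            normalOrderRHS B (Function.update v i y)) ∧
      -- … so the normal ordering map exists and is unique, …
      (∃! N : ExteriorAlgebra ℂ V →ₗ[ℂ] ExteriorAlgebra ℂ V, IsNormalOrdering B N) ∧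
      -- … and it is alternating under permutations of the wedge factors
      (∀ N : ExteriorAlgebra ℂ V →ₗ[ℂ] ExteriorAlgebra ℂ V, IsNormalOrdering B N →
        ∀ (n : ℕ) (v : Fin n → V) (σ : Equiv.Perm (Fin n)),
          N (wedgeAll (v ∘ σ)) = ((Equiv.Perm.sign σ : ℤ) : ℂ) • N (wedgeAll v)) := by
  have hN := isNormalOrdering_changeForm hB
  set N₀ := CliffordAlgebra.changeForm (toQuadraticMap_eq_sub hB)
  have hR : ∀ (n : ℕ) (v : Fin n → V),
      normalOrderRHS B v = N₀ (ExteriorAlgebra.ιMulti ℂ n v) := fun n v => by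
    rw [← hN n v, wedgeAll_eq]
  refine ⟨?_, ?_, ⟨N₀, hN, ?_⟩, ?_⟩
  · intro n v i j hij hv
    rw [hR, AlternatingMap.map_eq_zero_of_eq _ v hv hij, map_zero]
  · intro n v i c x y
    rw [hR, hR, hR, AlternatingMap.map_update_add, AlternatingMap.map_update_smul, map_add,
      map_smul]
  · intro N hN'
    refine LinearMap.ext_on_range (ExteriorAlgebra.ιMulti_span ℂ V) fun x => ?_
    rw [← wedgeAll_eq, hN', hN]
  · intro N _ n v σ
    rw [wedgeAll_eq, wedgeAll_eq, AlternatingMap.map_perm, Units.smul_def, map_zsmul,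
      Int.cast_smul_eq_zsmul]
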